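/- Consider n ≥ 2 users arranged on a directed ring, each user u ∈ {1,…,n} holding contributions x_u^1,…,x_u^K ∈ [0,1], and a noise distribution ν with standard deviation σ_loc making the additive mechanism (ε,δ)-LDP on [0,1]. Run the token protocol (Algorithm 1): the token starts at 0 and traverses users 1,2,…,n in order for K full cycles (Kn steps); at each step the current user adds her current contribution to the token, and additionally, at the first step and then after every n−1 further steps (for a total of m = ⌈Kn/(n−1)⌉ times), an independent sample from ν is added to the token. Then: (i) the final token value is an unbiased estimator of x̄ = Σ_{u=1}^n Σ_{k=1}^K x_u^k with standard deviation √m · σ_loc; and (ii) for every δ' > 0, every pair of distinct users u ≠ v, and every two contribution families in [0,1]^{n×K} that agree on all users except possibly u, the distributions of user v's view (the K token values v observes, one per cycle) are (√(2K ln(1/δ'))·ε + K·ε·(e^ε − 1), K·δ + δ')-indistinguishable. -/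

import Mathlib

open MeasureTheory

noncomputable section

/-- Two measures are `(ε,δ)`-indistinguishable if for every measurable set `S`,
`μ S ≤ e^ε·ν S + δ` and `ν S ≤ e^ε·μ S + δ`. -/
def Indist {Ω : Type*} [MeasurableSpace Ω] (ε δ : ℝ) (μ ν : Measure Ω) : Prop :=
  ∀ S : Set Ω, MeasurableSet S →
    μ S ≤ ENNReal.ofReal (Real.exp ε) * ν S + ENNReal.ofReal δ ∧
    ν S ≤ ENNReal.ofReal (Real.exp ε) * μ S + ENNReal.ofReal δ

/-- Algorithm 1 (token walk on the directed ring, users `0,…,n-1`, `K` cycles,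
steps `t = 0,…,Kn-1`; at step `t` user `t % n` adds her contribution `x (t % n) (t / n)`,
and an independent noise sample `z j` is added at step `j·(n-1)` for each `j < m`):
value of the token after the first `s` steps have been completed. -/
def ringToken (n m : ℕ) (x : ℕ → ℕ → ℝ) (z : Fin m → ℝ) (s : ℕ) : ℝ :=
  (∑ t ∈ Finset.range s, x (t % n) (t / n)) +
    ∑ j : Fin m, if (j : ℕ) * (n - 1) < s then z j else 0

/-- The view of user `v` on the ring: the `K` token values `v` observes, one per cycle
(the value of the token when `v` receives it in cycle `k`, i.e. after `k·n + v` steps). -/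
def ringView (n m K : ℕ) (x : ℕ → ℕ → ℝ) (v : ℕ) (z : Fin m → ℝ) : Fin K → ℝ :=
  fun k => ringToken n m x z ((k : ℕ) * n + v)

/-- product formula for lower integrals -/
lemma lintegral_pi_prod {ι : Type*} [Fintype ι] (P : ι → Measure ℝ)
    [∀ i, IsProbabilityMeasure (P i)] (g : ι → ℝ → ENNReal) (hg : ∀ i, Measurable (g i)) :
    ∫⁻ z, ∏ i, g i (z i) ∂(Measure.pi P) = ∏ i, ∫⁻ a, g i a ∂(P i) := by
  have h := ProbabilityTheory.lintegral_prod_eq_prod_lintegral_of_indepFun (μ := Measure.pi P)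
    Finset.univ (fun i z => g i (z i))
    (ProbabilityTheory.iIndepFun_pi (fun i => (hg i).aemeasurable))
    (fun i => (hg i).comp (measurable_pi_apply i))
  rw [h]
  refine Finset.prod_congr rfl fun i _ => ?_
  conv_rhs => rw [← (measurePreserving_eval P i).map_eq]
  rw [lintegral_map (hg i) (measurable_pi_apply i)]

lemma pi_withDensity_eq {ι : Type*} [Fintype ι] (P Q : ι → Measure ℝ)
    [∀ i, IsProbabilityMeasure (P i)] [∀ i, IsProbabilityMeasure (Q i)]
    (g : ι → ℝ → ENNReal) (hg : ∀ i, Measurable (g i))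
    (h : ∀ i, P i = (Q i).withDensity (g i)) :
    Measure.pi P = (Measure.pi Q).withDensity (fun z => ∏ i, g i (z i)) := by
  refine Measure.pi_eq fun s hs => ?_
  rw [withDensity_apply _ (MeasurableSet.univ_pi hs),
    ← lintegral_indicator (MeasurableSet.univ_pi hs)]
  have : (fun z : ι → ℝ => (Set.univ.pi s).indicator (fun z => ∏ i, g i (z i)) z)
      = fun z => ∏ i, (s i).indicator (g i) (z i) := by
    funext z
    by_cases hz : z ∈ Set.univ.pi s
    · rw [Set.indicator_of_mem hz]
      refine Finset.prod_congr rfl fun i _ => ?_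
      rw [Set.indicator_of_mem (hz i trivial)]
    · rw [Set.indicator_of_notMem hz]
      simp only [Set.mem_pi, Set.mem_univ, true_implies, not_forall] at hz
      obtain ⟨i, hi⟩ := hz
      exact (Finset.prod_eq_zero (Finset.mem_univ i) (Set.indicator_of_notMem hi _)).symm
  rw [this, lintegral_pi_prod Q _ (fun i => (hg i).indicator (hs i))]
  refine Finset.prod_congr rfl fun i _ => ?_
  rw [h i, withDensity_apply _ (hs i), lintegral_indicator (hs i)]

lemma pi_smul_le {ι : Type*} [Fintype ι] (P P' : ι → Measure ℝ)
    [∀ i, IsProbabilityMeasure (P i)] [∀ i, IsProbabilityMeasure (P' i)]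
    (c : ι → ENNReal) (h : ∀ i, c i • P' i ≤ P i) (S : Set (ι → ℝ)) (hS : MeasurableSet S) :
    (∏ i, c i) * Measure.pi P' S ≤ Measure.pi P S := by
  have h1 : (∏ i, c i) • (Measure.pi P').toOuterMeasure
      ≤ OuterMeasure.pi (fun i => (P i).toOuterMeasure) := by
    rw [OuterMeasure.le_pi]
    intro s _
    have : ((∏ i, c i) • (Measure.pi P').toOuterMeasure) (Set.univ.pi s)
      = (∏ i, c i) * Measure.pi P' (Set.univ.pi s) := rfl
    rw [this, Measure.pi_pi, ← Finset.prod_mul_distrib]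
    exact Finset.prod_le_prod' fun i _ => h i (s i)
  have h2 := h1 S
  have h3 : Measure.pi P S = OuterMeasure.pi (fun i => (P i).toOuterMeasure) S := by
    rw [Measure.pi, toMeasure_apply _ _ hS]
  rw [h3]
  exact h2

lemma mgf_bound (Q P : Measure ℝ) [IsProbabilityMeasure Q] [IsProbabilityMeasure P]
    (f : ℝ → ℝ) (hf : Measurable f) (ε : ℝ) (hε : 0 ≤ ε)
    (hl : ∀ a, Real.exp (-ε) ≤ f a) (hu : ∀ a, f a ≤ Real.exp ε)
    (hP : P = Q.withDensity (fun a => ENNReal.ofReal (f a))) (lam : ℝ) (hlam : 0 ≤ lam) :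
    ∫⁻ a, ENNReal.ofReal (Real.exp (lam * Real.log (f a))) ∂P
      ≤ ENNReal.ofReal (Real.exp (lam * (ε * (Real.exp ε - 1)) + lam ^ 2 * ε ^ 2 / 2)) := by
  have fpos : ∀ a, 0 < f a := fun a => (Real.exp_pos _).trans_le (hl a)
  have hLm : Measurable (fun a => Real.log (f a)) := hf.log
  have hL : ∀ a, Real.log (f a) ∈ Set.Icc (-ε) ε := fun a =>
    ⟨(Real.le_log_iff_exp_le (fpos a)).2 (hl a), (Real.log_le_iff_le_exp (fpos a)).2 (hu a)⟩
  have hsub := ProbabilityTheory.hasSubgaussianMGF_of_mem_Icc (μ := P) hLm.aemeasurable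
    (Filter.Eventually.of_forall hL)
  have hLint : Integrable (fun a => Real.log (f a)) P :=
    Integrable.of_mem_Icc (-ε) ε hLm.aemeasurable (Filter.Eventually.of_forall hL)
  have hw : ∀ a, (f a)⁻¹ ∈ Set.Icc (Real.exp (-ε)) (Real.exp ε) := by
    intro a
    constructor
    · rw [Real.exp_neg]; exact inv_anti₀ (fpos a) (hu a)
    · have := inv_anti₀ (Real.exp_pos _) (hl a)
      rwa [Real.exp_neg, inv_inv] at this
  have hwint : Integrable (fun a => (f a)⁻¹) P :=
    Integrable.of_mem_Icc _ _ hf.inv.aemeasurable (Filter.Eventually.of_forall hw)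
  have hw1 : ∫ a, (f a)⁻¹ ∂P = 1 := by
    rw [hP, integral_withDensity_eq_integral_toReal_smul hf.ennreal_ofReal
      (Filter.Eventually.of_forall fun a => ENNReal.ofReal_lt_top)]
    have : ∀ a, (ENNReal.ofReal (f a)).toReal • (f a)⁻¹ = 1 := by
      intro a
      rw [ENNReal.toReal_ofReal (fpos a).le, smul_eq_mul, mul_inv_cancel₀ (fpos a).ne']
    simp only [this]; simp
  have hmean : ∫ a, Real.log (f a) ∂P ≤ ε * (Real.exp ε - 1) := by
    have hpt : ∀ a, Real.log (f a) ≤ ε * (Real.exp ε - 1) - ((f a)⁻¹ - 1) := by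
      intro a
      set w := (f a)⁻¹ with hwd
      have hwp : 0 < w := inv_pos.2 (fpos a)
      have e1 : Real.log (f a) = - Real.log w := by rw [hwd, Real.log_inv, neg_neg]
      have h1 : w - 1 ≤ w * Real.log w := by
        have := Real.one_sub_inv_le_log_of_pos hwp
        have := mul_le_mul_of_nonneg_left this hwp.le
        rw [mul_sub, mul_inv_cancel₀ hwp.ne'] at this
        linarith
      have h2 : Real.log (f a) * (1 - w) ≤ ε * (Real.exp ε - 1) := by
        have a1 : |Real.log (f a)| ≤ ε := abs_le.2 (hL a)
        have a2 : |1 - w| ≤ Real.exp ε - 1 := by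
          have b1 := (hw a).1
          have b2 := (hw a).2
          have b3 : 1 - Real.exp (-ε) ≤ Real.exp ε - 1 := by
            have := Real.add_one_le_exp ε
            have := Real.add_one_le_exp (-ε)
            linarith
          rw [abs_le]; constructor <;> linarith
        calc _ ≤ |Real.log (f a) * (1 - w)| := le_abs_self _
          _ = |Real.log (f a)| * |1 - w| := abs_mul _ _
          _ ≤ _ := mul_le_mul a1 a2 (abs_nonneg _) hε
      rw [e1] at h2 ⊢
      nlinarith
    calc _ ≤ ∫ a, (ε * (Real.exp ε - 1) - ((f a)⁻¹ - 1)) ∂P :=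
          integral_mono hLint ((integrable_const _).sub (hwint.sub (integrable_const _))) hpt
      _ = _ := by
          have hi : Integrable (fun a => (f a)⁻¹ - 1) P := hwint.sub (integrable_const _)
          rw [integral_sub (integrable_const _) hi,
            integral_sub hwint (integrable_const _), hw1]
          simp
  have hmgf := hsub.mgf_le lam
  have hint := hsub.integrable_exp_mul lam
  set mL := ∫ a, Real.log (f a) ∂P with hmL
  have e2 : ∀ a, Real.exp (lam * Real.log (f a))
      = Real.exp (lam * mL) * Real.exp (lam * (Real.log (f a) - mL)) := by
    intro a; rw [← Real.exp_add]; ring_nf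
  have hint2 : Integrable (fun a => Real.exp (lam * Real.log (f a))) P := by
    simp_rw [e2]; exact hint.const_mul _
  rw [← ofReal_integral_eq_lintegral_ofReal hint2
    (Filter.Eventually.of_forall fun a => (Real.exp_pos _).le)]
  apply ENNReal.ofReal_le_ofReal
  simp_rw [e2]
  rw [integral_const_mul]
  unfold ProbabilityTheory.mgf at hmgf
  calc _ ≤ Real.exp (lam * mL) * _ := mul_le_mul_of_nonneg_left hmgf (Real.exp_pos _).le
    _ ≤ _ := by
      rw [← Real.exp_add]
      apply Real.exp_le_exp.2
      have e3 : (((‖ε - -ε‖₊ / 2) ^ 2 : NNReal) : ℝ) = ε ^ 2 := by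
        push_cast
        rw [Real.norm_eq_abs, div_pow, sq_abs]; ring
      rw [e3]
      have := mul_le_mul_of_nonneg_left hmean hlam
      nlinarith

lemma decomp_dens_aux (μ : Measure ℝ) (p q : ℝ → ℝ)
    (hpm : Measurable p) (hqm : Measurable q) (hp0 : ∀ a, 0 ≤ p a) (hq0 : ∀ a, 0 ≤ q a)
    (hpi : Integrable p μ) (hqi : Integrable q μ) (E : ℝ) (hE : 1 ≤ E)
    (h : ∫ a, min (q a) (E * p a) ∂μ ≤ ∫ a, min (p a) (E * q a) ∂μ) :
    ∃ p1 q1 : ℝ → ℝ, Measurable p1 ∧ Measurable q1 ∧ (∀ a, 0 ≤ p1 a) ∧ (∀ a, 0 ≤ q1 a) ∧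
      (∀ a, p1 a ≤ p a) ∧ (∀ a, q1 a ≤ q a) ∧ (∀ a, p1 a ≤ E * q1 a) ∧ (∀ a, q1 a ≤ E * p1 a) ∧
      ∫ a, p1 a ∂μ = ∫ a, q1 a ∂μ ∧
      ∫ a, q1 a ∂μ = min (∫ a, min (q a) (E * p a) ∂μ) (∫ a, min (p a) (E * q a) ∂μ) := by
  have hE0 : 0 < E := by linarith
  set p0 : ℝ → ℝ := fun a => min (p a) (E * q a) with hp0d
  set q0 : ℝ → ℝ := fun a => min (q a) (E * p a) with hq0d
  have hp0m : Measurable p0 := hpm.min (hqm.const_mul E)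
  have hq0m : Measurable q0 := hqm.min (hpm.const_mul E)
  have hp0n : ∀ a, 0 ≤ p0 a := fun a => le_min (hp0 a) (mul_nonneg hE0.le (hq0 a))
  have hq0n : ∀ a, 0 ≤ q0 a := fun a => le_min (hq0 a) (mul_nonneg hE0.le (hp0 a))
  have hp0i : Integrable p0 μ := hpi.inf (hqi.const_mul E)
  have hq0i : Integrable q0 μ := hqi.inf (hpi.const_mul E)
  have h1 : ∀ a, p0 a ≤ E * q0 a := by
    intro a
    simp only [hp0d, hq0d]
    rw [mul_min_of_nonneg _ _ hE0.le]
    refine le_min (min_le_right _ _) ((min_le_left _ _).trans ?_)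
    have := hp0 a
    nlinarith [mul_nonneg (mul_nonneg hE0.le (sub_nonneg.2 hE)) this, mul_nonneg (sub_nonneg.2 hE) this]
  have h2 : ∀ a, q0 a ≤ E * p0 a := by
    intro a
    simp only [hp0d, hq0d]
    rw [mul_min_of_nonneg _ _ hE0.le]
    refine le_min (min_le_right _ _) ((min_le_left _ _).trans ?_)
    have := hq0 a
    nlinarith [mul_nonneg (mul_nonneg hE0.le (sub_nonneg.2 hE)) this, mul_nonneg (sub_nonneg.2 hE) this]
  have hb : 0 ≤ ∫ a, q0 a ∂μ := integral_nonneg hq0n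
  -- mixing parameter
  obtain ⟨s, hs0, hs1, hs⟩ : ∃ s : ℝ, 0 ≤ s ∧ s ≤ 1 ∧
      (1 - s) * (∫ a, p0 a ∂μ) + s * (E⁻¹ * ∫ a, q0 a ∂μ) = ∫ a, q0 a ∂μ := by
    have hEi : E⁻¹ ≤ 1 := inv_le_one_of_one_le₀ hE
    have hle : E⁻¹ * ∫ a, q0 a ∂μ ≤ ∫ a, q0 a ∂μ := by nlinarith
    generalize E⁻¹ * ∫ a, q0 a ∂μ = e at *
    rcases eq_or_lt_of_le h with heq | hlt
    · exact ⟨0, le_rfl, zero_le_one, by rw [heq]; ring⟩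
    · have hd : 0 < (∫ a, p0 a ∂μ) - e := by linarith
      refine ⟨((∫ a, p0 a ∂μ) - ∫ a, q0 a ∂μ) / ((∫ a, p0 a ∂μ) - e),
        div_nonneg (by linarith) hd.le, (div_le_one hd).2 (by linarith), ?_⟩
      field_simp
      ring
  have hlow : ∀ a, E⁻¹ * q0 a ≤ p0 a := fun a => by
    rw [inv_mul_le_iff₀ hE0]; exact h2 a
  have hEi0 : 0 < E⁻¹ := inv_pos.2 hE0
  have hub : ∀ a, (1 - s) * p0 a + s * (E⁻¹ * q0 a) ≤ p0 a := fun a => by nlinarith [hlow a]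
  have hlb : ∀ a, E⁻¹ * q0 a ≤ (1 - s) * p0 a + s * (E⁻¹ * q0 a) := fun a => by nlinarith [hlow a]
  refine ⟨fun a => (1 - s) * p0 a + s * (E⁻¹ * q0 a), q0,
    (hp0m.const_mul _).add ((hq0m.const_mul _).const_mul _), hq0m, ?_, hq0n, ?_, ?_, ?_, ?_, ?_, ?_⟩
  · exact fun a => (mul_nonneg hEi0.le (hq0n a)).trans (hlb a)
  · exact fun a => (hub a).trans (min_le_left _ _)
  · exact fun a => min_le_left _ _
  · exact fun a => (hub a).trans (h1 a)
  · intro a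
    rw [← inv_mul_le_iff₀ hE0]; exact hlb a
  · have i1 : Integrable (fun a => (1 - s) * p0 a) μ := hp0i.const_mul _
    have i2 : Integrable (fun a => s * (E⁻¹ * q0 a)) μ := (hq0i.const_mul _).const_mul _
    rw [integral_add i1 i2, integral_const_mul, integral_const_mul, integral_const_mul, hs]
  · exact (min_eq_left h).symm

lemma decomp_dens (μ : Measure ℝ) (p q : ℝ → ℝ)
    (hpm : Measurable p) (hqm : Measurable q) (hp0 : ∀ a, 0 ≤ p a) (hq0 : ∀ a, 0 ≤ q a)
    (hpi : Integrable p μ) (hqi : Integrable q μ) (E : ℝ) (hE : 1 ≤ E) :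
    ∃ p1 q1 : ℝ → ℝ, Measurable p1 ∧ Measurable q1 ∧ (∀ a, 0 ≤ p1 a) ∧ (∀ a, 0 ≤ q1 a) ∧
      (∀ a, p1 a ≤ p a) ∧ (∀ a, q1 a ≤ q a) ∧ (∀ a, p1 a ≤ E * q1 a) ∧ (∀ a, q1 a ≤ E * p1 a) ∧
      ∫ a, p1 a ∂μ = ∫ a, q1 a ∂μ ∧
      ∫ a, q1 a ∂μ = min (∫ a, min (q a) (E * p a) ∂μ) (∫ a, min (p a) (E * q a) ∂μ) := by
  rcases le_total (∫ a, min (q a) (E * p a) ∂μ) (∫ a, min (p a) (E * q a) ∂μ) with h | h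
  · exact decomp_dens_aux μ p q hpm hqm hp0 hq0 hpi hqi E hE h
  · obtain ⟨q1, p1, a1, a2, a3, a4, a5, a6, a7, a8, a9, a10⟩ :=
      decomp_dens_aux μ q p hqm hpm hq0 hp0 hqi hpi E hE h
    exact ⟨p1, q1, a2, a1, a4, a3, a6, a5, a8, a7, a9.symm, by rw [a9, a10, min_comm]⟩

lemma mass_bound (μ : Measure ℝ) (p q : ℝ → ℝ)
    (hpm : Measurable p) (hqm : Measurable q) (hp0 : ∀ a, 0 ≤ p a) (hq0 : ∀ a, 0 ≤ q a)
    (hpi : Integrable p μ) (hqi : Integrable q μ) (P Q : Measure ℝ)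
    [IsProbabilityMeasure P] [IsProbabilityMeasure Q]
    (hP : P = μ.withDensity fun a => ENNReal.ofReal (p a))
    (hQ : Q = μ.withDensity fun a => ENNReal.ofReal (q a))
    (E δ : ℝ) (hE : 1 ≤ E) (hδ : 0 ≤ δ)
    (h : ∀ S, MeasurableSet S → P S ≤ ENNReal.ofReal E * Q S + ENNReal.ofReal δ) :
    1 - δ ≤ ∫ a, min (p a) (E * q a) ∂μ := by
  have hE0 : 0 < E := by linarith
  set S : Set ℝ := {a | E * q a < p a} with hSd
  have hS : MeasurableSet S := measurableSet_lt (hqm.const_mul E) hpm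
  have rP : ∀ T, MeasurableSet T → P.real T = ∫ a in T, p a ∂μ := by
    intro T hT
    rw [measureReal_def, hP, withDensity_apply _ hT, integral_eq_lintegral_of_nonneg_ae
      (Filter.Eventually.of_forall hp0) hpm.aestronglyMeasurable]
  have rQ : ∀ T, MeasurableSet T → Q.real T = ∫ a in T, q a ∂μ := by
    intro T hT
    rw [measureReal_def, hQ, withDensity_apply _ hT, integral_eq_lintegral_of_nonneg_ae
      (Filter.Eventually.of_forall hq0) hqm.aestronglyMeasurable]
  have hr : P.real S ≤ E * Q.real S + δ := by
    have := ENNReal.toReal_mono (by finiteness) (h S hS)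
    rw [ENNReal.toReal_add (by finiteness) (by finiteness), ENNReal.toReal_mul,
      ENNReal.toReal_ofReal hE0.le, ENNReal.toReal_ofReal hδ] at this
    exact this
  have hmi : Integrable (fun a => min (p a) (E * q a)) μ := hpi.inf (hqi.const_mul E)
  rw [← integral_add_compl hS hmi]
  have e1 : ∫ a in S, min (p a) (E * q a) ∂μ = E * Q.real S := by
    rw [rQ S hS, ← integral_const_mul]
    exact setIntegral_congr_fun hS fun a ha => min_eq_right (le_of_lt ha)
  have e2 : ∫ a in Sᶜ, min (p a) (E * q a) ∂μ = P.real Sᶜ := by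
    rw [rP Sᶜ hS.compl]
    exact setIntegral_congr_fun hS.compl fun a ha => min_eq_left (not_lt.1 ha)
  rw [e1, e2, probReal_compl_eq_one_sub hS]
  linarith

lemma exists_dens (P μ : Measure ℝ) [IsProbabilityMeasure P] [IsFiniteMeasure μ] (h : P ≪ μ) :
    ∃ p : ℝ → ℝ, Measurable p ∧ (∀ a, 0 ≤ p a) ∧ Integrable p μ ∧
      P = μ.withDensity fun a => ENNReal.ofReal (p a) := by
  refine ⟨fun a => (P.rnDeriv μ a).toReal, (Measure.measurable_rnDeriv P μ).ennreal_toReal,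
    fun a => ENNReal.toReal_nonneg, Measure.integrable_toReal_rnDeriv, ?_⟩
  conv_lhs => rw [← Measure.withDensity_rnDeriv_eq P μ h]
  apply withDensity_congr_ae
  filter_upwards [Measure.rnDeriv_lt_top P μ] with a ha
  rw [ENNReal.ofReal_toReal ha.ne]

lemma decomp (P Q : Measure ℝ) [IsProbabilityMeasure P] [IsProbabilityMeasure Q]
    (ε δ : ℝ) (hε : 0 ≤ ε) (hδ : 0 ≤ δ) (hδ1 : δ < 1) (h : Indist ε δ P Q) :
    ∃ (P' Q' : Measure ℝ) (f : ℝ → ℝ), IsProbabilityMeasure P' ∧ IsProbabilityMeasure Q' ∧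
      Measurable f ∧ (∀ a, Real.exp (-ε) ≤ f a) ∧ (∀ a, f a ≤ Real.exp ε) ∧
      P' = Q'.withDensity (fun a => ENNReal.ofReal (f a)) ∧
      ENNReal.ofReal (1 - δ) • P' ≤ P ∧ ENNReal.ofReal (1 - δ) • Q' ≤ Q := by
  set μ := P + Q with hμ
  obtain ⟨p, hpm, hp0, hpi, hP⟩ := exists_dens P μ
    (Measure.absolutelyContinuous_of_le (Measure.le_add_right le_rfl))
  obtain ⟨q, hqm, hq0, hqi, hQ⟩ := exists_dens Q μ
    (Measure.absolutelyContinuous_of_le (Measure.le_add_left le_rfl))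
  have hE : 1 ≤ Real.exp ε := Real.one_le_exp hε
  obtain ⟨p1, q1, p1m, q1m, p1n, q1n, p1le, q1le, hpq, hqp, heq, hmin⟩ :=
    decomp_dens μ p q hpm hqm hp0 hq0 hpi hqi _ hE
  have b1 := mass_bound μ p q hpm hqm hp0 hq0 hpi hqi P Q hP hQ _ δ hE hδ fun S hS => (h S hS).1
  have b2 := mass_bound μ q p hqm hpm hq0 hp0 hqi hpi Q P hQ hP _ δ hE hδ fun S hS => (h S hS).2
  have hb : 1 - δ ≤ ∫ a, q1 a ∂μ := by rw [hmin]; exact le_min b2 b1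
  clear_value μ
  generalize hbd : ∫ a, q1 a ∂μ = b at *
  have hb0 : 0 < b := by linarith
  have p1i : Integrable p1 μ := hpi.mono' p1m.aestronglyMeasurable
    (Filter.Eventually.of_forall fun a => by rw [Real.norm_of_nonneg (p1n a)]; exact p1le a)
  have q1i : Integrable q1 μ := hqi.mono' q1m.aestronglyMeasurable
    (Filter.Eventually.of_forall fun a => by rw [Real.norm_of_nonneg (q1n a)]; exact q1le a)
  have key : ∀ (r r1 : ℝ → ℝ) (R : Measure ℝ), Measurable r1 → (∀ a, 0 ≤ r1 a) →
      Integrable r1 μ → ∫ a, r1 a ∂μ = b → (∀ a, r1 a ≤ r a) →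
      R = μ.withDensity (fun a => ENNReal.ofReal (r a)) →
      IsProbabilityMeasure (μ.withDensity fun a => ENNReal.ofReal (r1 a / b)) ∧
      ENNReal.ofReal (1 - δ) • (μ.withDensity fun a => ENNReal.ofReal (r1 a / b)) ≤ R := by
    intro r r1 R r1m r1n r1i hr1 hle hR
    constructor
    · constructor
      rw [withDensity_apply _ MeasurableSet.univ, Measure.restrict_univ,
        ← ofReal_integral_eq_lintegral_ofReal (r1i.div_const b)
          (Filter.Eventually.of_forall fun a => div_nonneg (r1n a) hb0.le),
        integral_div, hr1, div_self hb0.ne', ENNReal.ofReal_one]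
    · rw [← withDensity_smul _ (by fun_prop), hR]
      apply withDensity_mono
      refine Filter.Eventually.of_forall fun a => ?_
      simp only [Pi.smul_apply, smul_eq_mul]
      rw [← ENNReal.ofReal_mul (by linarith)]
      apply ENNReal.ofReal_le_ofReal
      refine le_trans ?_ (hle a)
      rw [mul_div_assoc', div_le_iff₀ hb0, mul_comm]
      exact mul_le_mul_of_nonneg_left hb (r1n a)
  obtain ⟨kp1, kp2⟩ := key p p1 P p1m p1n p1i heq p1le hP
  obtain ⟨kq1, kq2⟩ := key q q1 Q q1m q1n q1i hbd q1le hQ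
  have hfm : Measurable (fun a => if q1 a = 0 then (1 : ℝ) else p1 a / q1 a) :=
    Measurable.ite (q1m (measurableSet_singleton 0)) measurable_const (p1m.div q1m)
  refine ⟨_, _, fun a => if q1 a = 0 then 1 else p1 a / q1 a, kp1, kq1, hfm, ?_, ?_, ?_, kp2, kq2⟩
  · intro a
    dsimp only
    split_ifs with h0
    · exact Real.exp_le_one_iff.2 (by linarith)
    · have hq : 0 < q1 a := lt_of_le_of_ne (q1n a) (Ne.symm h0)
      rw [Real.exp_neg, le_div_iff₀ hq, inv_mul_le_iff₀ (Real.exp_pos _)]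
      exact hqp a
  · intro a
    dsimp only
    split_ifs with h0
    · exact hE
    · have hq : 0 < q1 a := lt_of_le_of_ne (q1n a) (Ne.symm h0)
      rw [div_le_iff₀ hq]
      exact hpq a
  · rw [← withDensity_mul _ (by fun_prop) hfm.ennreal_ofReal]
    congr 1
    funext a
    simp only [Pi.mul_apply]
    rw [← ENNReal.ofReal_mul (div_nonneg (q1n a) hb0.le)]
    congr 1
    split_ifs with h0
    · have := hpq a
      rw [h0, mul_zero] at this
      rw [h0, le_antisymm this (p1n a)]; simp
    · field_simp

lemma comp_pi {ι : Type*} [Fintype ι] [DecidableEq ι] (J : Finset ι) (K : ℕ) (hK : 1 ≤ K)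
    (hJ : J.card ≤ K) (P Q : ι → Measure ℝ)
    [∀ i, IsProbabilityMeasure (P i)] [∀ i, IsProbabilityMeasure (Q i)]
    (ε δ δ' : ℝ) (hε : 0 < ε) (hδ : 0 < δ) (hδ' : 0 < δ')
    (hin : ∀ i ∈ J, Indist ε δ (P i) (Q i)) (hout : ∀ i ∉ J, P i = Q i)
    (S : Set (ι → ℝ)) (hS : MeasurableSet S) :
    Measure.pi P S ≤ ENNReal.ofReal (Real.exp
        (Real.sqrt (2 * K * Real.log (1 / δ')) * ε + K * ε * (Real.exp ε - 1))) * Measure.pi Q S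
      + ENNReal.ofReal (K * δ + δ') := by
  have hK' : (1 : ℝ) ≤ K := by exact_mod_cast hK
  rcases le_or_gt 1 (K * δ + δ') with hbig | hsmall
  · calc Measure.pi P S ≤ 1 := prob_le_one
      _ ≤ ENNReal.ofReal (K * δ + δ') := by rwa [ENNReal.one_le_ofReal]
      _ ≤ _ := le_add_self
  have hδ1 : δ < 1 := by nlinarith
  have hδ'1 : δ' < 1 := by nlinarith
  set ep : ι → ℝ := fun i => if i ∈ J then ε else 0 with hep
  set de : ι → ℝ := fun i => if i ∈ J then δ else 0 with hde
  have hep0 : ∀ i, 0 ≤ ep i := fun i => by simp only [hep]; split_ifs <;> linarith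
  have hde0 : ∀ i, 0 ≤ de i := fun i => by simp only [hde]; split_ifs <;> linarith
  have hde1 : ∀ i, de i < 1 := fun i => by simp only [hde]; split_ifs <;> linarith
  have hI : ∀ i, Indist (ep i) (de i) (P i) (Q i) := by
    intro i
    by_cases hi : i ∈ J
    · simpa only [hep, hde, if_pos hi] using hin i hi
    · simp only [hep, hde, if_neg hi, hout i hi]
      intro T _
      simp
  choose P' Q' f hP' hQ' hfm hfl hfu hPQ hPle hQle using fun i =>
    decomp (P i) (Q i) (ep i) (de i) (hep0 i) (hde0 i) (hde1 i) (hI i)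
  have fpos : ∀ i a, 0 < f i a := fun i a => (Real.exp_pos _).trans_le (hfl i a)
  set l := Real.log (1 / δ') with hl
  have hl0 : 0 < l := Real.log_pos (by rw [lt_div_iff₀ hδ']; linarith)
  set ε' := Real.sqrt (2 * K * l) * ε + K * ε * (Real.exp ε - 1) with hε'
  set r := Real.sqrt (2 * K * l) with hr
  have hr2 : r ^ 2 = 2 * K * l := Real.sq_sqrt (by positivity)
  have hr0 : 0 ≤ r := Real.sqrt_nonneg _
  set lam := r / (K * ε) with hlamd
  have hlam : 0 ≤ lam := by positivity
  -- log-likelihood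
  set L : (ι → ℝ) → ℝ := fun z => ∑ i, Real.log (f i (z i)) with hL
  have hLm : Measurable L := Finset.measurable_sum _ fun i _ =>
    ((hfm i).comp (measurable_pi_apply i)).log
  set T : Set (ι → ℝ) := {z | L z ≤ ε'} with hT
  have hTm : MeasurableSet T := measurableSet_le hLm measurable_const
  -- main part
  have m1 : Measure.pi P' (S ∩ T) ≤ ENNReal.ofReal (Real.exp ε') * Measure.pi Q' S := by
    rw [pi_withDensity_eq P' Q' (fun i a => ENNReal.ofReal (f i a))
      (fun i => (hfm i).ennreal_ofReal) hPQ, withDensity_apply _ (hS.inter hTm)]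
    calc _ ≤ ∫⁻ z in S ∩ T, ENNReal.ofReal (Real.exp ε') ∂(Measure.pi Q') := by
          refine setLIntegral_mono measurable_const fun z hz => ?_
          rw [← ENNReal.ofReal_prod_of_nonneg fun i _ => (fpos i _).le]
          apply ENNReal.ofReal_le_ofReal
          have : ∏ i, f i (z i) = Real.exp (L z) := by
            rw [hL, Real.exp_sum]
            exact Finset.prod_congr rfl fun i _ => (Real.exp_log (fpos i _)).symm
          rw [this]
          exact Real.exp_le_exp.2 hz.2
      _ = ENNReal.ofReal (Real.exp ε') * Measure.pi Q' (S ∩ T) := by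
          rw [setLIntegral_const]
      _ ≤ _ := by gcongr; exact Set.inter_subset_left
  have m2 : Measure.pi P' Tᶜ ≤ ENNReal.ofReal δ' := by
    have hcher : Measure.pi P' Tᶜ ≤
        ∫⁻ z, ENNReal.ofReal (Real.exp (-(lam * ε'))) *
          ∏ i, ENNReal.ofReal (Real.exp (lam * Real.log (f i (z i)))) ∂(Measure.pi P') := by
      rw [← lintegral_indicator_one hTm.compl]
      refine lintegral_mono fun z => ?_
      rw [← ENNReal.ofReal_prod_of_nonneg fun i _ => (Real.exp_pos _).le, ← Real.exp_sum,
        ← ENNReal.ofReal_mul (Real.exp_pos _).le, ← Real.exp_add, ← Finset.mul_sum]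
      by_cases hz : z ∈ Tᶜ
      · rw [Set.indicator_of_mem hz, Pi.one_apply, ENNReal.one_le_ofReal]
        apply Real.one_le_exp
        have : ε' ≤ L z := le_of_lt (not_le.1 hz)
        have := mul_le_mul_of_nonneg_left this hlam
        simp only [hL] at this
        linarith
      · rw [Set.indicator_of_notMem hz]; exact zero_le
    refine hcher.trans ?_
    have hgm : ∀ i, Measurable fun a => ENNReal.ofReal (Real.exp (lam * Real.log (f i a))) :=
      fun i => (((hfm i).log.const_mul lam).exp).ennreal_ofReal
    have hpm : Measurable fun z : ι → ℝ =>
        ∏ i, ENNReal.ofReal (Real.exp (lam * Real.log (f i (z i)))) :=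
      Finset.measurable_prod _ fun i _ => (hgm i).comp (measurable_pi_apply i)
    rw [lintegral_const_mul _ hpm, lintegral_pi_prod P' _ hgm]
    calc _ ≤ ENNReal.ofReal (Real.exp (-(lam * ε'))) * ∏ i, ENNReal.ofReal (Real.exp
            (lam * (ep i * (Real.exp (ep i) - 1)) + lam ^ 2 * ep i ^ 2 / 2)) := by
          gcongr with i _
          exact mgf_bound (Q' i) (P' i) (f i) (hfm i) (ep i) (hep0 i) (hfl i) (hfu i) (hPQ i)
            lam hlam
      _ ≤ _ := by
          rw [← ENNReal.ofReal_prod_of_nonneg fun i _ => (Real.exp_pos _).le, ← Real.exp_sum,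
            ← ENNReal.ofReal_mul (Real.exp_pos _).le, ← Real.exp_add]
          apply ENNReal.ofReal_le_ofReal
          have hsum : ∑ i, (lam * (ep i * (Real.exp (ep i) - 1)) + lam ^ 2 * ep i ^ 2 / 2)
              = J.card * (lam * (ε * (Real.exp ε - 1)) + lam ^ 2 * ε ^ 2 / 2) := by
            have : ∀ i, (lam * (ep i * (Real.exp (ep i) - 1)) + lam ^ 2 * ep i ^ 2 / 2)
                = if i ∈ J then (lam * (ε * (Real.exp ε - 1)) + lam ^ 2 * ε ^ 2 / 2) else 0 := by
              intro i
              simp only [hep]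
              split_ifs <;> simp
            simp_rw [this]
            rw [Finset.sum_ite_mem, Finset.univ_inter, Finset.sum_const, nsmul_eq_mul]
          rw [hsum]
          have hBn : 0 ≤ lam * (ε * (Real.exp ε - 1)) + lam ^ 2 * ε ^ 2 / 2 := by
            have : 0 ≤ Real.exp ε - 1 := by linarith [Real.add_one_le_exp ε]
            positivity
          have hJr : (J.card : ℝ) ≤ K := by exact_mod_cast hJ
          have h1 := mul_le_mul_of_nonneg_right hJr hBn
          have h2 : -(lam * ε') + K * (lam * (ε * (Real.exp ε - 1)) + lam ^ 2 * ε ^ 2 / 2)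
              = - l := by
            have : lam * ε * K = r := by rw [hlamd]; field_simp
            have h3 : K * (lam ^ 2 * ε ^ 2) = 2 * l := by
              have : K * (K * (lam ^ 2 * ε ^ 2)) = K * (2 * l) := by
                calc _ = (lam * ε * K) ^ 2 := by ring
                  _ = _ := by rw [this, hr2]; ring
              exact mul_left_cancel₀ (by positivity) this
            have h4 : lam * r * ε = 2 * l := by
              rw [← this, ← h3]; ring
            rw [hε']
            linear_combination (-1) * h4 + h3 / 2
          calc _ ≤ Real.exp (-l) := Real.exp_le_exp.2 (by linarith)
            _ = δ' := by rw [hl, one_div, Real.log_inv, neg_neg, Real.exp_log hδ']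
  have m3 : Measure.pi P' S ≤ ENNReal.ofReal (Real.exp ε') * Measure.pi Q' S
      + ENNReal.ofReal δ' := by
    calc Measure.pi P' S ≤ Measure.pi P' (S ∩ T ∪ Tᶜ) := by
          apply measure_mono
          intro z hz
          by_cases h : z ∈ T
          · exact Or.inl ⟨hz, h⟩
          · exact Or.inr h
      _ ≤ _ := measure_union_le _ _
      _ ≤ _ := add_le_add m1 m2
  -- total mass of the good part
  have hc : ∏ i, ENNReal.ofReal (1 - de i) = ENNReal.ofReal ((1 - δ) ^ J.card) := by
    rw [← ENNReal.ofReal_prod_of_nonneg fun i _ => by linarith [hde1 i]]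
    congr 1
    have : ∀ i, 1 - de i = if i ∈ J then 1 - δ else 1 := by
      intro i
      simp only [hde]
      split_ifs <;> simp
    simp_rw [this]
    rw [Finset.prod_ite_mem, Finset.univ_inter, Finset.prod_const]
  set c : ℝ := (1 - δ) ^ J.card with hcd
  have hc0 : 0 ≤ c := pow_nonneg (by linarith) _
  have hc1 : c ≤ 1 := pow_le_one₀ (by linarith) (by linarith)
  have hcK : 1 - c ≤ K * δ := by
    have hb := one_add_mul_le_pow (a := -δ) (by linarith) J.card
    have hJr : (J.card : ℝ) ≤ K := by exact_mod_cast hJ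
    have := mul_le_mul_of_nonneg_right hJr hδ.le
    rw [← sub_eq_add_neg] at hb
    linarith
  have q1 : c * (Measure.pi Q').real S ≤ (Measure.pi Q).real S := by
    have := pi_smul_le Q Q' _ hQle S hS
    rw [hc] at this
    have := ENNReal.toReal_mono (by finiteness) this
    rwa [ENNReal.toReal_mul, ENNReal.toReal_ofReal hc0] at this
  have p1 : (Measure.pi P).real S ≤ 1 - c + c * (Measure.pi P').real S := by
    have := pi_smul_le P P' _ hPle Sᶜ hS.compl
    rw [hc] at this
    have := ENNReal.toReal_mono (by finiteness) this
    rw [ENNReal.toReal_mul, ENNReal.toReal_ofReal hc0] at this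
    change c * (Measure.pi P').real Sᶜ ≤ (Measure.pi P).real Sᶜ at this
    rw [probReal_compl_eq_one_sub hS, probReal_compl_eq_one_sub hS] at this
    linarith
  have r3 : (Measure.pi P').real S ≤ Real.exp ε' * (Measure.pi Q').real S + δ' := by
    have := ENNReal.toReal_mono (by finiteness) m3
    rwa [ENNReal.toReal_add (by finiteness) (by finiteness), ENNReal.toReal_mul,
      ENNReal.toReal_ofReal (Real.exp_pos _).le, ENNReal.toReal_ofReal hδ'.le] at this
  have fin : (Measure.pi P).real S ≤ Real.exp ε' * (Measure.pi Q).real S + (K * δ + δ') := by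
    have a1 := mul_le_mul_of_nonneg_left r3 hc0
    have a2 := mul_le_mul_of_nonneg_left q1 (Real.exp_pos ε').le
    have a3 : c * δ' ≤ δ' := by nlinarith
    nlinarith
  have hp : Measure.pi P S = ENNReal.ofReal ((Measure.pi P).real S) := by
    rw [measureReal_def, ENNReal.ofReal_toReal (by finiteness)]
  have hq : Measure.pi Q S = ENNReal.ofReal ((Measure.pi Q).real S) := by
    rw [measureReal_def, ENNReal.ofReal_toReal (by finiteness)]
  rw [hp, hq, ← ENNReal.ofReal_mul (Real.exp_pos _).le,
    ← ENNReal.ofReal_add (by positivity) (by positivity)]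
  exact ENNReal.ofReal_le_ofReal fin

/-- combinatorics of the ring: each contribution of `u` seen by `v` is masked by a noise. -/
lemma exists_mask (n K m u v : ℕ) (hn : 2 ≤ n) (hm : m = (K * n + n - 2) / (n - 1))
    (hu : u < n) (hv : v < n) (huv : u ≠ v) (c : ℕ)
    (hc : ∃ k < K, c * n + u < k * n + v) :
    ∃ j < m, ∀ k < K, (c * n + u < k * n + v ↔ j * (n - 1) < k * n + v) := by
  obtain ⟨d, rfl⟩ : ∃ d, n = d + 2 := ⟨n - 2, by omega⟩
  have hd : d + 2 - 1 = d + 1 := by omega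
  rw [hd] at hm ⊢
  -- it suffices to find `j` in the right window
  have hjm : ∀ j k, k < K → j * (d + 1) < k * (d + 2) + v → j < m := by
    intro j k hk hj
    have h1 : (k + 1) * (d + 2) ≤ K * (d + 2) := Nat.mul_le_mul_right _ hk
    rw [hm, Nat.lt_iff_add_one_le, Nat.le_div_iff_mul_le (by omega)]
    have : (j + 1) * (d + 1) = j * (d + 1) + d + 1 := by ring
    have : (k + 1) * (d + 2) = k * (d + 2) + d + 2 := by ring
    omega
  have hceil : ∀ s, ∃ j, s ≤ j * (d + 1) ∧ j * (d + 1) < s + (d + 2) := by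
    intro s
    refine ⟨(s + d) / (d + 1), ?_, ?_⟩
    · have := Nat.lt_div_mul_add (a := s + d) (b := d + 1) (by omega)
      omega
    · have := Nat.div_mul_le_self (s + d) (d + 1)
      omega
  have hmono : ∀ a b : ℕ, a < b → a * (d + 2) + (d + 2) ≤ b * (d + 2) := by
    intro a b hab
    have := Nat.mul_le_mul_right (d + 2) hab
    calc _ = (a + 1) * (d + 2) := by ring
      _ ≤ _ := this
  have hmono' : ∀ a b : ℕ, a ≤ b → a * (d + 2) ≤ b * (d + 2) :=
    fun a b hab => Nat.mul_le_mul_right (d + 2) hab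
  -- the first view that sees the contribution
  have hfirst : ∃ g, (∀ k, c * (d + 2) + u < k * (d + 2) + v ↔ g ≤ k) ∧ (g = 0 → 0 < v) := by
    rcases lt_or_gt_of_ne huv with h | h
    · refine ⟨c, fun k => ⟨fun hk => ?_, fun hk => ?_⟩, fun _ => by omega⟩
      · by_contra hlt
        have := hmono k c (by omega)
        omega
      · have := hmono' c k hk
        omega
    · refine ⟨c + 1, fun k => ⟨fun hk => ?_, fun hk => ?_⟩, fun h => by omega⟩
      · by_contra hlt
        have := hmono' k c (by omega)
        omega
      · have := hmono c k hk
        omega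
  obtain ⟨g, hg, hg0⟩ := hfirst
  obtain ⟨k0, hk0, hck0⟩ := hc
  have hgK : g < K := lt_of_le_of_lt ((hg k0).1 hck0) hk0
  have hwin : ∃ j, ∀ k, g ≤ k ↔ j * (d + 1) < k * (d + 2) + v := by
    rcases Nat.eq_zero_or_pos g with h0 | hpos
    · refine ⟨0, fun k => ?_⟩
      have := hg0 h0
      constructor <;> intro _ <;> omega
    · obtain ⟨j, hj1, hj2⟩ := hceil ((g - 1) * (d + 2) + v)
      have hgm := hmono (g - 1) g (by omega)
      have hge : (g - 1) * (d + 2) + (d + 2) = g * (d + 2) := by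
        obtain ⟨g', rfl⟩ : ∃ g', g = g' + 1 := ⟨g - 1, by omega⟩
        simp only [Nat.add_sub_cancel]; ring
      refine ⟨j, fun k => ⟨fun hk => ?_, fun hk => ?_⟩⟩
      · have := hmono' g k hk
        omega
      · by_contra hlt
        have := hmono' k (g - 1) (by omega)
        omega
  obtain ⟨j, hj⟩ := hwin
  exact ⟨j, hjm j g hgK ((hj g).1 le_rfl), fun k _ => (hg k).trans (hj k)⟩

lemma seen_sep (n u v c c' k' : ℕ) (hu : u < n) (hv : v < n) (huv : u ≠ v)
    (hcc : c < c') (h : c' * n + u < k' * n + v) :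
    ∃ k ≤ k', c * n + u < k * n + v ∧ ¬ (c' * n + u < k * n + v) := by
  have hmono : ∀ a b : ℕ, a < b → a * n + n ≤ b * n := by
    intro a b hab
    have := Nat.mul_le_mul_right n hab
    calc _ = (a + 1) * n := by ring
      _ ≤ _ := this
  have hmono' : ∀ a b : ℕ, a ≤ b → a * n ≤ b * n := fun a b hab => Nat.mul_le_mul_right n hab
  have h1 := hmono c c' hcc
  rcases lt_or_gt_of_ne huv with hlt | hlt
  · refine ⟨c, ?_, by omega, by omega⟩
    by_contra hk
    have := hmono' k' c (by omega)
    omega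
  · have h2 : (c + 1) * n = c * n + n := by ring
    refine ⟨c + 1, ?_, by omega, by omega⟩
    by_contra hk
    have := hmono' k' c (by omega)
    omega

lemma sum_split (n u : ℕ) (hu : u < n) (x : ℕ → ℕ → ℝ) (K s : ℕ) (hs : s ≤ K * n) :
    ∑ t ∈ Finset.range s, x (t % n) (t / n)
      = (∑ t ∈ Finset.range s, if t % n = u then 0 else x (t % n) (t / n))
        + ∑ c ∈ Finset.range K, if c * n + u < s then x u c else 0 := by
  have h1 : ∑ t ∈ Finset.range s, x (t % n) (t / n)
      = (∑ t ∈ Finset.range s, if t % n = u then 0 else x (t % n) (t / n))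
        + ∑ t ∈ Finset.range s, if t % n = u then x (t % n) (t / n) else 0 := by
    rw [← Finset.sum_add_distrib]
    refine Finset.sum_congr rfl fun t _ => ?_
    split_ifs <;> simp
  rw [h1]
  congr 1
  rw [← Finset.sum_filter, ← Finset.sum_filter]
  have hn : 0 < n := by omega
  refine Finset.sum_nbij' (fun t => t / n) (fun c => c * n + u) ?_ ?_ ?_ ?_ ?_
  · intro t ht
    simp only [Finset.mem_filter, Finset.mem_range] at ht ⊢
    have h2 := Nat.div_add_mod' t n
    rw [ht.2] at h2
    rw [h2]
    exact ⟨(Nat.div_lt_iff_lt_mul hn).2 (by omega), ht.1⟩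
  · intro c hc
    simp only [Finset.mem_filter, Finset.mem_range] at hc ⊢
    exact ⟨hc.2, by rw [Nat.mul_add_mod_self_right, Nat.mod_eq_of_lt hu]⟩
  · intro t ht
    simp only [Finset.mem_filter, Finset.mem_range] at ht
    have h2 := Nat.div_add_mod' t n
    rw [ht.2] at h2
    exact h2
  · intro c _
    rw [mul_comm, Nat.mul_add_div hn, Nat.div_eq_of_lt hu, add_zero]
  · intro t ht
    simp only [Finset.mem_filter, Finset.mem_range] at ht
    rw [ht.2]

/-- Theorem 1: private real summation on the ring.
`ν` is a centered noise distribution with variance `σloc²` making the additive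
mechanism `(ε,δ)`-LDP on `[0,1]`, and `m = ⌈Kn/(n-1)⌉` is the number of noise
additions. Then (i) the final token is an unbiased estimator of
`x̄ = ∑_{u,k} x_u^k` with variance `m·σloc²` (standard deviation `√m·σloc`), and
(ii) for any `δ' > 0` and distinct users `u ≠ v`, the views of `v` under two
contribution families in `[0,1]` differing only at user `u` are
`(√(2K·ln(1/δ'))·ε + K·ε·(e^ε − 1), K·δ + δ')`-indistinguishable. -/
theorem ring_real_summation
    (n K : ℕ) (hn : 2 ≤ n) (hK : 1 ≤ K)
    (ε δ σloc : ℝ) (hε : 0 < ε) (hδ : 0 < δ)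
    (ν : Measure ℝ) (hprob : IsProbabilityMeasure ν)
    (hint : Integrable (fun a => a) ν) (hint2 : Integrable (fun a => a ^ 2) ν)
    (hmean : (∫ a, a ∂ν) = 0) (hvar : (∫ a, a ^ 2 ∂ν) = σloc ^ 2)
    (hLDP : ∀ a ∈ Set.Icc (0 : ℝ) 1, ∀ b ∈ Set.Icc (0 : ℝ) 1,
      Indist ε δ (ν.map (· + a)) (ν.map (· + b)))
    (m : ℕ) (hm : m = (K * n + n - 2) / (n - 1)) :
    -- (i) utility: unbiasedness and variance of the final token
    (∀ x : ℕ → ℕ → ℝ, (∀ w k, x w k ∈ Set.Icc (0 : ℝ) 1) →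
      (∫ z, ringToken n m x z (K * n) ∂(Measure.pi fun _ : Fin m => ν))
          = (∑ t ∈ Finset.range (K * n), x (t % n) (t / n)) ∧
      (∫ z, (ringToken n m x z (K * n)
              - ∑ t ∈ Finset.range (K * n), x (t % n) (t / n)) ^ 2
          ∂(Measure.pi fun _ : Fin m => ν)) = m * σloc ^ 2)
    ∧
    -- (ii) network differential privacy of the view of any user v w.r.t. any user u
    (∀ δ' : ℝ, 0 < δ' → ∀ u v : ℕ, u < n → v < n → u ≠ v →
      ∀ x x' : ℕ → ℕ → ℝ,
        (∀ w k, x w k ∈ Set.Icc (0 : ℝ) 1) → (∀ w k, x' w k ∈ Set.Icc (0 : ℝ) 1) →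
        (∀ w k, w ≠ u → x w k = x' w k) →
        Indist (Real.sqrt (2 * K * Real.log (1 / δ')) * ε + K * ε * (Real.exp ε - 1))
          (K * δ + δ')
          (Measure.map (ringView n m K x v) (Measure.pi fun _ : Fin m => ν))
          (Measure.map (ringView n m K x' v) (Measure.pi fun _ : Fin m => ν))) := by
  have hjlt : ∀ j : Fin m, (j : ℕ) * (n - 1) < K * n := by
    intro j
    have h1 : (j : ℕ) + 1 ≤ (K * n + n - 2) / (n - 1) := by rw [← hm]; exact j.2
    rw [Nat.le_div_iff_mul_le (by omega)] at h1
    have h2 : ((j : ℕ) + 1) * (n - 1) = (j : ℕ) * (n - 1) + (n - 1) := by ring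
    omega
  constructor
  · intro x _
    have htok : ∀ z : Fin m → ℝ, ringToken n m x z (K * n)
        = (∑ t ∈ Finset.range (K * n), x (t % n) (t / n)) + ∑ j, z j := by
      intro z
      unfold ringToken
      congr 1
      exact Finset.sum_congr rfl fun j _ => if_pos (hjlt j)
    have hi : ∀ j : Fin m, Integrable (fun z : Fin m → ℝ => z j) (Measure.pi fun _ => ν) :=
      fun j => integrable_eval (μ := fun _ : Fin m => ν) hint
    have hsum0 : ∫ z, ∑ j, z j ∂(Measure.pi fun _ : Fin m => ν) = 0 := by
      rw [integral_finsetSum _ fun j _ => hi j]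
      refine Finset.sum_eq_zero fun j _ => ?_
      rw [integral_eval (μ := fun _ : Fin m => ν), hmean]
    constructor
    · simp_rw [htok]
      rw [integral_add (integrable_const _) (integrable_finsetSum _ fun j _ => hi j), hsum0]
      simp
    · simp_rw [htok, add_sub_cancel_left]
      have hL2 : MemLp (fun a : ℝ => a) 2 ν :=
        (memLp_two_iff_integrable_sq hint.aestronglyMeasurable).2 hint2
      have hv := ProbabilityTheory.variance_sum_pi (μ := fun _ : Fin m => ν)
        (X := fun _ a => a) (fun _ => hL2)
      have hfe : (∑ i : Fin m, fun ω : Fin m → ℝ => ω i) = fun z => ∑ j, z j := by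
        funext z; simp
      rw [hfe, ProbabilityTheory.variance_of_integral_eq_zero
        (integrable_finsetSum _ fun j _ => hi j).aemeasurable hsum0] at hv
      rw [hv]
      have h1 : ProbabilityTheory.variance (fun a : ℝ => a) ν = σloc ^ 2 := by
        rw [ProbabilityTheory.variance_of_integral_eq_zero hint.aemeasurable hmean, hvar]
      simp [h1]
  · intro δ' hδ' u v hu hv huv x x' hx hx' hxx'
    classical
    set C : Finset ℕ := (Finset.range K).filter (fun c => ∃ k < K, c * n + u < k * n + v) with hC
    have hex : ∀ c, ∃ j, c ∈ C →
        (j < m ∧ ∀ k < K, (c * n + u < k * n + v ↔ j * (n - 1) < k * n + v)) := by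
      intro c
      by_cases hc : c ∈ C
      · obtain ⟨j, hj, hj'⟩ := exists_mask n K m u v hn hm hu hv huv c (Finset.mem_filter.1 hc).2
        exact ⟨j, fun _ => ⟨hj, hj'⟩⟩
      · exact ⟨0, fun h => absurd h hc⟩
    choose jj hjj using hex
    have hinj' : ∀ c ∈ C, ∀ c' ∈ C, c < c' → jj c ≠ jj c' := by
      intro c hc c' hc' hlt heq
      obtain ⟨k', hk', hck'⟩ := (Finset.mem_filter.1 hc').2
      obtain ⟨k, hk, h1, h2⟩ := seen_sep n u v c c' k' hu hv huv hlt hck'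
      have hkK : k < K := lt_of_le_of_lt hk hk'
      apply h2
      rw [(hjj c' hc').2 k hkK, ← heq, ← (hjj c hc).2 k hkK]
      exact h1
    have hinj : ∀ c ∈ C, ∀ c' ∈ C, jj c = jj c' → c = c' := by
      intro c hc c' hc' heq
      rcases lt_trichotomy c c' with h | h | h
      · exact absurd heq (hinj' c hc c' hc' h)
      · exact h
      · exact absurd heq.symm (hinj' c' hc' c hc h)
    set J : Finset (Fin m) := Finset.univ.filter (fun j => ∃ c ∈ C, jj c = (j : ℕ)) with hJ
    have hJcard : J.card ≤ K := by
      calc J.card = (J.image (fun j : Fin m => (j : ℕ))).card :=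
            (Finset.card_image_of_injective _ Fin.val_injective).symm
        _ ≤ (C.image jj).card := by
            apply Finset.card_le_card
            intro a ha
            obtain ⟨j, hj, rfl⟩ := Finset.mem_image.1 ha
            obtain ⟨c, hc, hcj⟩ := (Finset.mem_filter.1 hj).2
            exact Finset.mem_image.2 ⟨c, hc, hcj⟩
        _ ≤ C.card := Finset.card_image_le
        _ ≤ (Finset.range K).card := Finset.card_filter_le _ _
        _ = K := Finset.card_range K
    set sh : (ℕ → ℕ → ℝ) → Fin m → ℝ :=
      fun y j => ∑ c ∈ C, if jj c = (j : ℕ) then y u c else 0 with hsh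
    have hsh1 : ∀ (y : ℕ → ℕ → ℝ) (j : Fin m) (c : ℕ), c ∈ C → jj c = j → sh y j = y u c := by
      intro y j c hc hcj
      simp only [hsh]
      rw [Finset.sum_eq_single_of_mem c hc, if_pos hcj]
      intro c' hc' hne
      exact if_neg fun h => hne (hinj c' hc' c hc (h.trans hcj.symm))
    have hsh0 : ∀ (y : ℕ → ℕ → ℝ) (j : Fin m), j ∉ J → sh y j = 0 := by
      intro y j hj
      simp only [hsh]
      refine Finset.sum_eq_zero fun c hc => if_neg fun h => hj ?_
      exact Finset.mem_filter.2 ⟨Finset.mem_univ _, c, hc, h⟩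
    set G : (Fin m → ℝ) → (Fin K → ℝ) := fun z k =>
      (∑ t ∈ Finset.range ((k : ℕ) * n + v), if t % n = u then 0 else x (t % n) (t / n)) +
        ∑ j : Fin m, if (j : ℕ) * (n - 1) < (k : ℕ) * n + v then z j else 0 with hG
    have hGm : Measurable G := by
      refine measurable_pi_lambda _ fun k => ?_
      refine measurable_const.add (Finset.measurable_sum _ fun j _ => ?_)
      by_cases h : (j : ℕ) * (n - 1) < (k : ℕ) * n + v
      · simp only [if_pos h]; exact measurable_pi_apply j
      · simp only [if_neg h]; exact measurable_const
    have hview : ∀ y : ℕ → ℕ → ℝ, (∀ w k, w ≠ u → x w k = y w k) →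
        ringView n m K y v = G ∘ (fun z j => z j + sh y j) := by
      intro y hy
      funext z k
      have hk : (k : ℕ) * n + v ≤ K * n := by
        have : ((k : ℕ) + 1) * n ≤ K * n := Nat.mul_le_mul_right n k.2
        have : ((k : ℕ) + 1) * n = (k : ℕ) * n + n := by ring
        omega
      simp only [ringView, ringToken, hG, Function.comp]
      rw [sum_split n u hu y K _ hk]
      have e1 : (∑ t ∈ Finset.range ((k : ℕ) * n + v), if t % n = u then 0 else y (t % n) (t / n))
          = ∑ t ∈ Finset.range ((k : ℕ) * n + v), if t % n = u then 0 else x (t % n) (t / n) := by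
        refine Finset.sum_congr rfl fun t _ => ?_
        split_ifs with h
        · rfl
        · exact (hy _ _ h).symm
      have e2 : (∑ c ∈ Finset.range K, if c * n + u < (k : ℕ) * n + v then y u c else 0)
          = ∑ c ∈ C, if jj c * (n - 1) < (k : ℕ) * n + v then y u c else 0 := by
        rw [hC, Finset.sum_filter]
        refine Finset.sum_congr rfl fun c hc => ?_
        by_cases h : ∃ k < K, c * n + u < k * n + v
        · rw [if_pos h]
          have hcC : c ∈ C := Finset.mem_filter.2 ⟨hc, h⟩
          simp only [(hjj c hcC).2 k k.2]
        · rw [if_neg h, if_neg fun h' => h ⟨k, k.2, h'⟩]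
      have e3 : (∑ j : Fin m, if (j : ℕ) * (n - 1) < (k : ℕ) * n + v then z j + sh y j else 0)
          = (∑ j : Fin m, if (j : ℕ) * (n - 1) < (k : ℕ) * n + v then z j else 0)
            + ∑ c ∈ C, if jj c * (n - 1) < (k : ℕ) * n + v then y u c else 0 := by
        have e4 : (∑ c ∈ C, if jj c * (n - 1) < (k : ℕ) * n + v then y u c else 0)
            = ∑ j : Fin m, if (j : ℕ) * (n - 1) < (k : ℕ) * n + v then sh y j else 0 := by
          have : ∀ j : Fin m, (if (j : ℕ) * (n - 1) < (k : ℕ) * n + v then sh y j else 0)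
              = ∑ c ∈ C, if jj c = (j : ℕ) then
                  (if jj c * (n - 1) < (k : ℕ) * n + v then y u c else 0) else 0 := by
            intro j
            split_ifs with h
            · refine Finset.sum_congr rfl fun c _ => ?_
              split_ifs with h1 h2
              · rfl
              · rw [h1] at h2; exact absurd h h2
              · rfl
            · refine (Finset.sum_eq_zero fun c _ => ?_).symm
              split_ifs with h1 h2
              · rw [h1] at h2; exact absurd h2 h
              · rfl
              · rfl
          simp_rw [this]
          rw [Finset.sum_comm]
          refine Finset.sum_congr rfl fun c hc => ?_
          rw [Finset.sum_eq_single_of_mem (⟨jj c, (hjj c hc).1⟩ : Fin m) (Finset.mem_univ _)]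
          · rw [if_pos rfl]
          · intro j _ hne
            exact if_neg fun h => hne (Fin.ext h.symm)
        rw [e4, ← Finset.sum_add_distrib]
        refine Finset.sum_congr rfl fun j _ => ?_
        split_ifs <;> simp
      rw [e1, e2, e3]
      ring
    have hmap : ∀ y : ℕ → ℕ → ℝ, (∀ w k, w ≠ u → x w k = y w k) → ∀ S, MeasurableSet S →
        Measure.map (ringView n m K y v) (Measure.pi fun _ : Fin m => ν) S
          = Measure.pi (fun j => ν.map (· + sh y j)) (G ⁻¹' S) := by
      intro y hy S hS
      have hprobs : ∀ j, IsProbabilityMeasure (ν.map (· + sh y j)) := fun j =>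
        Measure.isProbabilityMeasure_map (measurable_id.add_const _).aemeasurable
      rw [hview y hy, ← Measure.map_map hGm (measurable_pi_lambda _ fun j =>
        (measurable_pi_apply j).add_const _), Measure.map_apply hGm hS,
        Measure.pi_map_pi (f := fun j a => a + sh y j)
          (fun j => (measurable_id.add_const _).aemeasurable)]
    have hpr : ∀ y j, IsProbabilityMeasure (ν.map (· + sh y j)) := fun y j =>
      Measure.isProbabilityMeasure_map (measurable_id.add_const _).aemeasurable
    have hmain : ∀ y y' : ℕ → ℕ → ℝ, (∀ w k, y w k ∈ Set.Icc (0 : ℝ) 1) →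
        (∀ w k, y' w k ∈ Set.Icc (0 : ℝ) 1) → ∀ S : Set (Fin m → ℝ), MeasurableSet S →
        Measure.pi (fun j => ν.map (· + sh y j)) S ≤ ENNReal.ofReal (Real.exp
          (Real.sqrt (2 * K * Real.log (1 / δ')) * ε + K * ε * (Real.exp ε - 1)))
            * Measure.pi (fun j => ν.map (· + sh y' j)) S + ENNReal.ofReal (K * δ + δ') := by
      intro y y' hy hy' S hS
      refine comp_pi J K hK hJcard _ _ ε δ δ' hε hδ hδ' ?_ ?_ S hS
      · intro j hj
        obtain ⟨c, hc, hcj⟩ := (Finset.mem_filter.1 hj).2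
        rw [hsh1 y j c hc hcj, hsh1 y' j c hc hcj]
        exact hLDP _ (hy u c) _ (hy' u c)
      · intro j hj
        rw [hsh0 y j hj, hsh0 y' j hj]
    intro S hS
    rw [hmap x (fun _ _ _ => rfl) S hS, hmap x' hxx' S hS]
    exact ⟨hmain x x' hx hx' _ (hGm hS), hmain x' x hx' hx _ (hGm hS)⟩
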